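/- Let μ ∈ ℝ and θ₊, θ₋ ∈ [0,2π), set α := −iμ/2, and let u : ℝ → ℂ be a smooth solution of the PII equation u''(x) = x·u(x) + 2·u(x)³ − α on ℝ, taking purely imaginary values on ℝ and satisfying both asymptotic expansions: (A+) there exist x₀, K > 0 such that |u(x) − α/x − 2α(1−α²)·x^{−4} − 4α(1−α²)(10−3α²)·x^{−7}| ≤ K·x^{−10} for all x ≥ x₀, and (A−) there exist d ∈ iℝ, φ ∈ ℝ and x₁, K' > 0 such that |u(x) − α/x − d·(−x)^{−1/4}·sin( (2/3)(−x)^{3/2} − (3/4)·d²·ln(−x) + φ )| ≤ K'·(−x)^{−7/4} for all x ≤ −x₁. Assume moreover that lim_{x→+∞} exp( 2·∫_{−x}^{x} u(y) dy ) = e^{i(θ₊−θ₋)}. Define w(x) := ∫₀ˣ exp( (2/3^{1/3}) ∫₀^y u(z/3^{1/3}) dz ) dy − C with C := (2·3^{1/3}/(1−iμ))·(u'(0) − u(0)²). Then there exist β ∈ [0,2π) and a constant M > 0 such that the function z(t,x) := e^{iβ}·t^{1/3}·e^{−(iμ/3)·ln t}·w(x·t^{−1/3}) satisfies the geometric flow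 ∂_t z = −∂_x³ z + (3/2)·conj(∂_x z)·(∂_x² z)² and |∂_x z| = 1 on (0,∞)×ℝ, and satisfies |z(t,x) − z₀(x)| ≤ M·t^{1/3} for all t > 0 and all x ∈ ℝ \ {0}, where z₀(x) := x·(1+μ²)^{−1/2}·e^{i(θ₊ − μ·ln x)} for x > 0 and z₀(x) := x·(1+μ²)^{−1/2}·e^{i(θ₋ − μ·ln|x|)} for x < 0. -/

import Mathlib

/-!
With `a = -iμ` and `v x = u (x / c) / c`, `c = 3 ^ (1 / 3)`, the curve `w` has unit tangent `F`,
`F' = 2 v F`, and the Painlevé equation integrates to `(1 + a) w = x F + 6 (v² - v') F`. This is the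
equation for `w` to be the profile of a self-similar solution of the flow.

The identity also gives `((w - 6 v F / x) x ^ (-1 - a))' = O(x⁻²)` as soon as `v` is bounded: the
subtracted term removes `v'` from the derivative. So `w` stays at bounded distance from a spiral
`γ x ^ (1 + a)`, and the homogeneity of spirals turns this into the rate `t ^ (1 / 3)`.
A bounded Painlevé function has derivative `o(x)`, by its energy, so the identity also forces
`F x ^ (-a) → (1 + a) γ`. Thus `|γ| = (1 + μ²) ^ (-1 / 2)` at both ends, the limit of
`F x / F (-x)` is the ratio of the two amplitudes `γ`, and one rotation adjusts both of them.
-/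

/-- The real cube root of 3. -/
noncomputable def cbrt3 : ℝ := (3 : ℝ) ^ ((1:ℝ)/3)

open Filter Topology Asymptotics Bornology

/-! ### Self-similar solutions of the flow -/

/-- The geometric planar flow `z_t = -z_xxx + (3/2) conj(z_x) z_xx²`, `|z_x| = 1`, on
`(0, ∞) × ℝ`. -/
def SolvesGeometricFlow (z : ℝ → ℝ → ℂ) : Prop :=
  ∀ t : ℝ, 0 < t → ∀ x : ℝ,
    (deriv (fun s : ℝ => z s x) t =
      -(deriv (deriv (deriv (z t))) x) +
        (3/2) * (starRingEnd ℂ) (deriv (z t) x) * (deriv (deriv (z t)) x) ^ 2) ∧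
    ‖deriv (z t) x‖ = 1

/-- The self-similar evolution `q t^((1 + a) / 3) w(x t^(-1/3))` with profile `w`. For imaginary `a`
the factor `t^(a / 3)` is a rotation. -/
noncomputable def selfSimilarCurve (q a : ℂ) (w : ℝ → ℂ) (t x : ℝ) : ℂ :=
  q * (t : ℂ) ^ ((1 + a) / 3) * w (x * t ^ (-(1:ℝ)/3))

section SelfSimilar

variable {q a : ℂ} {w : ℝ → ℂ} {t : ℝ}

lemma norm_ofReal_cpow_of_re_eq_zero {x : ℝ} (hx : 0 < x) (ha : a.re = 0) :
    ‖(x : ℂ) ^ a‖ = 1 := by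
  rw [Complex.norm_cpow_eq_rpow_re_of_pos hx, ha, Real.rpow_zero]

lemma ofReal_cpow_one_add {x : ℝ} (hx : 0 < x) (a : ℂ) :
    (x : ℂ) ^ (1 + a) = x * Complex.exp (a * Real.log x) := by
  have hx0 : (x : ℂ) ≠ 0 := by exact_mod_cast hx.ne'
  rw [Complex.cpow_add _ _ hx0, Complex.cpow_one, Complex.cpow_def_of_ne_zero hx0,
    Complex.ofReal_log hx.le, mul_comm a]

lemma ofReal_cpow_mul_rpow_neg_third (ht : 0 < t) (a : ℂ) :
    (t : ℂ) ^ ((1 + a) / 3) * ((t ^ (-(1:ℝ)/3) : ℝ) : ℂ) = (t : ℂ) ^ (a / 3) := by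
  have ht0 : (t : ℂ) ≠ 0 := by exact_mod_cast ht.ne'
  rw [Complex.ofReal_cpow ht.le, ← Complex.cpow_add _ _ ht0]
  congr 1
  push_cast
  ring

lemma rpow_neg_third_pow_three (ht : 0 < t) : (t ^ (-(1:ℝ)/3)) ^ 3 = t⁻¹ := by
  rw [← Real.rpow_mul_natCast ht.le, ← Real.rpow_neg_one]
  norm_num

lemma selfSimilarCurve_eq (ht : 0 < t) (q a : ℂ) (w : ℝ → ℂ) (x : ℝ) :
    selfSimilarCurve q a w t x = q * ((t ^ ((1:ℝ)/3) : ℝ) : ℂ) *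
      Complex.exp (a / 3 * Real.log t) * w (x * t ^ (-(1:ℝ)/3)) := by
  have ht0 : (t : ℂ) ≠ 0 := by exact_mod_cast ht.ne'
  rw [selfSimilarCurve, add_div, Complex.cpow_add _ _ ht0, Complex.cpow_def_of_ne_zero ht0 (a / 3),
    Complex.ofReal_log ht.le, Complex.ofReal_cpow ht.le, mul_comm (a / 3)]
  push_cast
  ring

lemma deriv_const_mul_comp_mul_right (p : ℂ) (r : ℝ) (g : ℝ → ℂ) :
    deriv (fun x => p * g (x * r)) = fun x => p * r * deriv g (x * r) := by
  funext x
  simp only [mul_comm _ r, deriv_const_mul_field, deriv_comp_mul_left, Complex.real_smul, mul_assoc]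

lemma deriv_selfSimilarCurve (ht : 0 < t) (q a : ℂ) (w : ℝ → ℂ) :
    deriv (selfSimilarCurve q a w t) =
      fun x => q * (t : ℂ) ^ (a / 3) * deriv w (x * t ^ (-(1:ℝ)/3)) := by
  refine (deriv_const_mul_comp_mul_right _ _ w).trans ?_
  simp only [mul_assoc q, ofReal_cpow_mul_rpow_neg_third ht]

lemma hasDerivAt_selfSimilarCurve_time (ht : 0 < t) (q a : ℂ) (hw : Differentiable ℝ w) (x : ℝ) :
    HasDerivAt (fun s => selfSimilarCurve q a w s x)
      (q * (t : ℂ) ^ ((1 + a) / 3) * ((1 + a) * w (x * t ^ (-(1:ℝ)/3)) -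
        (x * t ^ (-(1:ℝ)/3) : ℝ) * deriv w (x * t ^ (-(1:ℝ)/3))) / (3 * t)) t := by
  have ht0 : (t : ℂ) ≠ 0 := by exact_mod_cast ht.ne'
  have scale : HasDerivAt (fun s : ℝ => (s : ℂ) ^ ((1 + a) / 3))
      ((1 + a) / 3 * ((t : ℂ) ^ ((1 + a) / 3) / t)) t := by
    simpa [Complex.cpow_sub _ _ ht0] using
      ((hasDerivAt_id (t : ℂ)).cpow_const (c := (1 + a) / 3) (by simp [ht])).comp_ofReal
  have argument : HasDerivAt (fun s : ℝ => x * s ^ (-(1:ℝ)/3))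
      (x * (-(1:ℝ)/3 * (t ^ (-(1:ℝ)/3) / t))) t := by
    simpa [Real.rpow_sub_one ht.ne'] using
      (Real.hasDerivAt_rpow_const (p := -(1:ℝ)/3) (Or.inl ht.ne')).const_mul x
  have profile := (hw (x * t ^ (-(1:ℝ)/3))).hasDerivAt.scomp t argument
  refine ((scale.const_mul q).mul profile).congr_deriv ?_
  simp only [Function.comp_apply, Complex.real_smul]
  push_cast
  field_simp
  ring

theorem solvesGeometricFlow_selfSimilarCurve (hq : ‖q‖ = 1) (ha : a.re = 0)
    (hw : Differentiable ℝ w) (hunit : ∀ x, ‖deriv w x‖ = 1)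
    (hstat : ∀ x : ℝ, (1 + a) * w x - x * deriv w x =
      3 * (-deriv (deriv (deriv w)) x +
        (3/2) * (starRingEnd ℂ) (deriv w x) * deriv (deriv w) x ^ 2)) :
    SolvesGeometricFlow (selfSimilarCurve q a w) := by
  intro t ht x
  rw [(hasDerivAt_selfSimilarCurve_time ht q a hw x).deriv, deriv_selfSimilarCurve ht, hstat]
  have hscale : q * (t : ℂ) ^ ((1 + a) / 3) / t =
      q * (t : ℂ) ^ (a / 3) * ((t ^ (-(1:ℝ)/3) : ℝ) : ℂ) ^ 2 := by
    rw [← ofReal_cpow_mul_rpow_neg_third ht a, div_eq_mul_inv, ← Complex.ofReal_inv,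
      ← rpow_neg_third_pow_three ht]
    push_cast
    ring
  have hp : ‖q * (t : ℂ) ^ (a / 3)‖ = 1 := by
    rw [norm_mul, hq, norm_ofReal_cpow_of_re_eq_zero ht (by simp [ha]), mul_one]
  set p := q * (t : ℂ) ^ (a / 3)
  have hconj : (starRingEnd ℂ) p * p = 1 := by simp [Complex.conj_mul', hp]
  simp only [deriv_const_mul_comp_mul_right, norm_mul p, hp, hunit, map_mul, mul_one, and_true]
  set r := t ^ (-(1:ℝ)/3)
  set y := x * r
  linear_combination
    (-deriv (deriv (deriv w)) y + (3/2) * (starRingEnd ℂ) (deriv w y) * deriv (deriv w) y ^ 2) *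
      hscale - (3/2) * p * r ^ 2 * (starRingEnd ℂ) (deriv w y) * deriv (deriv w) y ^ 2 * hconj

end SelfSimilar

/-! ### Profile curves -/

/-- `w` is a curve with unit tangent `F` and curvature `-2iv`, `v'` is the derivative of `v`, and
`w` satisfies the self-similar stationary equation with parameters `a` and `ε`. The geometric flow
corresponds to `ε = 3`; the sign of `ε` changes under the reflection `x ↦ -x`. -/
structure IsProfile (a ε : ℂ) (w F v v' : ℝ → ℂ) : Prop where
  hasDerivAt_curve : ∀ x, HasDerivAt w (F x) x
  norm_tangent : ∀ x, ‖F x‖ = 1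
  hasDerivAt_tangent : ∀ x, HasDerivAt F (2 * v x * F x) x
  hasDerivAt_curvature : ∀ x, HasDerivAt v (v' x) x
  stationary : ∀ x : ℝ, (1 + a) * w x = x * F x + 2 * ε * (v x ^ 2 - v' x) * F x

lemma hasDerivAt_ofReal (x : ℝ) : HasDerivAt (fun y : ℝ => (y : ℂ)) 1 x :=
  (hasDerivAt_id (x : ℂ)).comp_ofReal

lemma hasDerivAt_comp_neg {E : Type*} [NormedAddCommGroup E] [NormedSpace ℝ E] {g : ℝ → E}
    {g' : E} {x : ℝ} (hg : HasDerivAt g g' (-x)) :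
    HasDerivAt (fun y => g (-y)) (-g') x := by
  simpa [Function.comp_def] using hg.scomp x (hasDerivAt_neg x)

namespace IsProfile

variable {a ε q : ℂ} {w F v v' : ℝ → ℂ}

theorem of_painleveII (hε : ε ≠ 0)
    (hw : ∀ x, HasDerivAt w (F x) x) (hF1 : ∀ x, ‖F x‖ = 1)
    (hF : ∀ x, HasDerivAt F (2 * v x * F x) x) (hv : ∀ x, HasDerivAt v (v' x) x)
    (hv' : ∀ x : ℝ, HasDerivAt v' ((x * v x - a / 2) / ε + 2 * v x ^ 3) x)
    (h0 : (1 + a) * w 0 = 2 * ε * (v 0 ^ 2 - v' 0) * F 0) :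
    IsProfile a ε w F v v' := by
  refine ⟨hw, hF1, hF, hv, fun x => ?_⟩
  let G : ℝ → ℂ := fun x => (1 + a) * w x - (x * F x + 2 * ε * (v x ^ 2 - v' x) * F x)
  have hG : ∀ x, HasDerivAt G 0 x := fun x => by
    refine (((hw x).const_mul (1 + a)).sub (((hasDerivAt_ofReal x).mul (hF x)).add
      (((((hv x).pow 2).sub (hv' x)).const_mul (2 * ε)).mul (hF x)))).congr_deriv ?_
    simp only [Pi.pow_apply, Pi.sub_apply]
    field_simp
    push_cast
    ring
  have hconst : G x = G 0 :=
    is_const_of_deriv_eq_zero (fun y => (hG y).differentiableAt) (fun y => (hG y).deriv) x 0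
  have hG0 : G 0 = 0 := by simp [G, h0]
  exact sub_eq_zero.1 (hconst.trans hG0)

lemma neg (h : IsProfile a ε w F v v') :
    IsProfile a (-ε) (fun x => -w (-x)) (fun x => F (-x)) (fun x => -v (-x))
      (fun x => v' (-x)) where
  hasDerivAt_curve x := by simpa using! (hasDerivAt_comp_neg (h.hasDerivAt_curve (-x))).neg
  norm_tangent x := h.norm_tangent (-x)
  hasDerivAt_tangent x := by simpa using hasDerivAt_comp_neg (h.hasDerivAt_tangent (-x))
  hasDerivAt_curvature x := by simpa using! (hasDerivAt_comp_neg (h.hasDerivAt_curvature (-x))).neg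
  stationary x := by
    have hx := h.stationary (-x)
    push_cast at hx
    linear_combination -hx

theorem solvesGeometricFlow (h : IsProfile a 3 w F v v') (ha : a.re = 0) (hq : ‖q‖ = 1) :
    SolvesGeometricFlow (selfSimilarCurve q a w) := by
  have hw' : deriv w = F := funext fun x => (h.hasDerivAt_curve x).deriv
  have hw'' : deriv F = fun x => 2 * v x * F x := funext fun x => (h.hasDerivAt_tangent x).deriv
  have hw''' (x : ℝ) : deriv (fun x => 2 * v x * F x) x = (2 * v' x + 4 * v x ^ 2) * F x := by
    refine (((h.hasDerivAt_curvature x).const_mul 2).mul (h.hasDerivAt_tangent x)).deriv.trans ?_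
    ring
  refine solvesGeometricFlow_selfSimilarCurve hq ha
    (fun x => (h.hasDerivAt_curve x).differentiableAt) (by simpa only [hw'] using h.norm_tangent)
    fun x => ?_
  have hconj : (starRingEnd ℂ) (F x) * F x = 1 := by
    rw [Complex.conj_mul', h.norm_tangent]
    norm_num
  simp only [hw', hw'', hw''']
  linear_combination h.stationary x - 18 * v x ^ 2 * F x * hconj

end IsProfile

/-! ### Convergence to logarithmic spirals -/

lemma exists_norm_sub_le_of_norm_deriv_le_deriv {E : Type*} [NormedAddCommGroup E]
    [NormedSpace ℝ E] [CompleteSpace E] {f f' : ℝ → E} {g g' : ℝ → ℝ} {b l : ℝ}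
    (hf : ∀ x, b ≤ x → HasDerivAt f (f' x) x) (hg : ∀ x, b ≤ x → HasDerivAt g (g' x) x)
    (hfg : ∀ x, b ≤ x → ‖f' x‖ ≤ g' x) (hl : Tendsto g atTop (𝓝 l)) :
    ∃ γ : E, ∀ x, b ≤ x → ‖f x - γ‖ ≤ l - g x := by
  have increment (x y : ℝ) (hx : b ≤ x) (hxy : x ≤ y) : ‖f y - f x‖ ≤ g y - g x :=
    image_norm_le_of_norm_deriv_right_le_deriv_boundary'
      (f := fun z => f z - f x) (B := fun z => g z - g x)
      (fun z hz => ((hf z (hx.trans hz.1)).sub_const _).continuousAt.continuousWithinAt)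
      (fun z hz => ((hf z (hx.trans hz.1)).sub_const _).hasDerivWithinAt)
      (by simp)
      (fun z hz => ((hg z (hx.trans hz.1)).sub_const _).continuousAt.continuousWithinAt)
      (fun z hz => ((hg z (hx.trans hz.1)).sub_const _).hasDerivWithinAt)
      (fun z hz => hfg z (hx.trans hz.1)) ⟨hxy, le_rfl⟩
  have g_le (y : ℝ) (hy : b ≤ y) : g y ≤ l := by
    refine ge_of_tendsto hl ?_
    filter_upwards [eventually_ge_atTop y] with z hz
    exact sub_nonneg.1 ((norm_nonneg _).trans (increment y z hy hz))
  have bound (x y : ℝ) (hx : b ≤ x) (hxy : x ≤ y) : ‖f x - f y‖ ≤ l - g x := by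
    rw [norm_sub_rev]
    linarith [increment x y hx hxy, g_le y (hx.trans hxy)]
  have max_atTop : Tendsto (max b) atTop atTop :=
    tendsto_atTop_mono (fun x => le_max_right b x) tendsto_id
  have cauchy : CauchySeq fun x => f (max b x) := by
    refine cauchySeq_of_le_tendsto_0' (fun x => l - g (max b x)) (fun x y hxy => ?_) ?_
    · rw [dist_eq_norm]
      exact bound _ _ (le_max_left b x) (max_le_max_left b hxy)
    · simpa using (hl.comp max_atTop).const_sub l
  obtain ⟨γ, hγ⟩ := cauchySeq_tendsto_of_complete cauchy
  refine ⟨γ, fun x hx => le_of_tendsto (hγ.const_sub (f x)).norm ?_⟩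
  filter_upwards [eventually_ge_atTop x] with y hxy
  exact bound _ _ hx (hxy.trans (le_max_right b y))

lemma exists_norm_sub_le_div_of_norm_deriv_le {E : Type*} [NormedAddCommGroup E]
    [NormedSpace ℝ E] [CompleteSpace E] {f f' : ℝ → E} {b N : ℝ} (hb : 0 < b)
    (hf : ∀ x, b ≤ x → HasDerivAt f (f' x) x) (hN : ∀ x, b ≤ x → ‖f' x‖ ≤ N / x ^ 2) :
    ∃ γ : E, ∀ x, b ≤ x → ‖f x - γ‖ ≤ N / x := by
  have hg (x : ℝ) (hx : b ≤ x) : HasDerivAt (fun x : ℝ => -(N * x⁻¹)) (N / x ^ 2) x := by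
    simpa [div_eq_mul_inv] using! ((hasDerivAt_inv (hb.trans_le hx).ne').const_mul N).neg
  have hl : Tendsto (fun x : ℝ => -(N * x⁻¹)) atTop (𝓝 0) := by
    simpa using (tendsto_inv_atTop_zero.const_mul N).neg
  simpa [div_eq_mul_inv] using exists_norm_sub_le_of_norm_deriv_le_deriv hf hg hN hl

/-- The ratio of the curve `w` to the model spiral `x^(1+a)`, corrected by a term which removes `v'`
from its derivative. -/
noncomputable def spiralAmplitude (a ε : ℂ) (w F v : ℝ → ℂ) (x : ℝ) : ℂ :=
  (w x - 2 * ε * v x * F x / x) * (x : ℂ) ^ (-(1 + a))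

lemma isLittleO_id_atTop_of_norm_le {E : Type*} [NormedAddCommGroup E] {f : ℝ → E} {M : ℝ}
    (hf : ∀ᶠ x in atTop, ‖f x‖ ≤ M) : f =o[atTop] fun x : ℝ => x :=
  (IsBigO.of_bound M (by simpa using hf)).trans_isLittleO (isLittleO_const_id_atTop (1 : ℝ))

namespace IsProfile

variable {a ε : ℂ} {w F v v' : ℝ → ℂ} {B x : ℝ}

lemma hasDerivAt_spiralAmplitude (h : IsProfile a ε w F v v') (hx : 0 < x) :
    HasDerivAt (spiralAmplitude a ε w F v)
      ((-6 * ε * v x ^ 2 + 2 * ε * (2 + a) * v x / x) * F x * (x : ℂ) ^ (-(2 + a))) x := by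
  have hx0 : (x : ℂ) ≠ 0 := by exact_mod_cast hx.ne'
  have correction := (((h.hasDerivAt_curvature x).const_mul (2 * ε)).mul
    (h.hasDerivAt_tangent x)).div (hasDerivAt_ofReal x) hx0
  have power : HasDerivAt (fun y : ℝ => (y : ℂ) ^ (-(1 + a)))
      (-(1 + a) * (x : ℂ) ^ (-(2 + a))) x := by
    rw [show -(2 + a) = -(1 + a) - 1 by ring]
    simpa using ((hasDerivAt_id (x : ℂ)).cpow_const (c := -(1 + a)) (by simp [hx])).comp_ofReal
  have hpow : (x : ℂ) ^ (-(1 + a)) = x * (x : ℂ) ^ (-(2 + a)) := by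
    rw [show -(1 + a) = 1 + -(2 + a) by ring, Complex.cpow_add _ _ hx0, Complex.cpow_one]
  refine (((h.hasDerivAt_curve x).sub correction).mul power).congr_deriv ?_
  simp only [Pi.sub_apply, Pi.mul_apply, Pi.div_apply, hpow]
  field_simp
  linear_combination (-x * (x : ℂ) ^ (-(2 + a))) * h.stationary x

lemma norm_deriv_spiralAmplitude_le (h : IsProfile a ε w F v v') (ha : a.re = 0)
    (hB : ‖v x‖ ≤ B) (hx : 1 ≤ x) :
    ‖(-6 * ε * v x ^ 2 + 2 * ε * (2 + a) * v x / x) * F x * (x : ℂ) ^ (-(2 + a))‖ ≤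
      (6 * ‖ε‖ * B ^ 2 + 2 * ‖ε‖ * ‖2 + a‖ * B) / x ^ 2 := by
  have hx0 : 0 < x := by positivity
  have hpow : ‖(x : ℂ) ^ (-(2 + a))‖ = (x ^ 2)⁻¹ := by
    rw [Complex.norm_cpow_eq_rpow_re_of_pos hx0]
    simp [ha, Real.rpow_neg hx0.le]
  have hfirst : ‖-6 * ε * v x ^ 2‖ ≤ 6 * ‖ε‖ * B ^ 2 := by
    simp only [norm_mul, norm_neg, norm_pow, Complex.norm_ofNat]
    gcongr
  have hsecond : ‖2 * ε * (2 + a) * v x / x‖ ≤ 2 * ‖ε‖ * ‖2 + a‖ * B := by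
    simp only [norm_mul, norm_div, Complex.norm_ofNat, Complex.norm_real,
      Real.norm_of_nonneg hx0.le]
    refine (div_le_self (by positivity) hx).trans ?_
    gcongr
  rw [norm_mul, norm_mul, h.norm_tangent, mul_one, hpow, div_eq_mul_inv]
  exact mul_le_mul_of_nonneg_right (norm_add_le_of_le hfirst hsecond) (by positivity)

lemma exists_norm_curve_sub_spiral_le_of_one_le (h : IsProfile a ε w F v v') (ha : a.re = 0)
    (hB : ∀ x, ‖v x‖ ≤ B) :
    ∃ γ : ℂ, ∃ M : ℝ, ∀ x : ℝ, 1 ≤ x → ‖w x - γ * (x : ℂ) ^ (1 + a)‖ ≤ M := by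
  obtain ⟨γ, hγ⟩ := exists_norm_sub_le_div_of_norm_deriv_le one_pos
    (fun x hx => h.hasDerivAt_spiralAmplitude (zero_lt_one.trans_le hx))
    (fun x hx => h.norm_deriv_spiralAmplitude_le ha (hB x) hx)
  refine ⟨γ, 6 * ‖ε‖ * B ^ 2 + 2 * ‖ε‖ * ‖2 + a‖ * B + 2 * ‖ε‖ * B, fun x hx => ?_⟩
  have hx0 : 0 < x := by positivity
  have hxc : (x : ℂ) ≠ 0 := by exact_mod_cast hx0.ne'
  have hinv : (x : ℂ) ^ (-(1 + a)) * (x : ℂ) ^ (1 + a) = 1 := by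
    rw [← Complex.cpow_add _ _ hxc, neg_add_cancel, Complex.cpow_zero]
  have hpow : ‖(x : ℂ) ^ (1 + a)‖ = x := by
    simp [Complex.norm_cpow_eq_rpow_re_of_pos hx0, ha]
  have hsplit : w x - γ * (x : ℂ) ^ (1 + a) =
      (spiralAmplitude a ε w F v x - γ) * (x : ℂ) ^ (1 + a) + 2 * ε * v x * F x / x := by
    rw [spiralAmplitude]
    linear_combination -(w x - 2 * ε * v x * F x / x) * hinv
  rw [hsplit]
  refine norm_add_le_of_le ?_ ?_
  · rw [norm_mul, hpow]
    exact (le_div_iff₀ hx0).1 (hγ x hx)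
  · simp only [norm_mul, norm_div, h.norm_tangent, Complex.norm_ofNat, Complex.norm_real,
      Real.norm_of_nonneg hx0.le, mul_one]
    refine (div_le_self (by positivity) hx).trans ?_
    gcongr
    exact hB x

lemma exists_norm_curve_sub_spiral_le (h : IsProfile a ε w F v v') (ha : a.re = 0)
    (hB : ∀ x, ‖v x‖ ≤ B) :
    ∃ γ : ℂ, ∃ M : ℝ, ∀ x : ℝ, 0 < x → ‖w x - γ * (x : ℂ) ^ (1 + a)‖ ≤ M := by
  obtain ⟨γ, M, hM⟩ := h.exists_norm_curve_sub_spiral_le_of_one_le ha hB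
  obtain ⟨M₀, hM₀⟩ := (isCompact_Icc (a := (0:ℝ)) (b := 1)).exists_bound_of_continuousOn
    (f := w) fun x _ => (h.hasDerivAt_curve x).continuousAt.continuousWithinAt
  refine ⟨γ, max M (M₀ + ‖γ‖), fun x hx => ?_⟩
  rcases le_total 1 x with hx1 | hx1
  · exact (hM x hx1).trans (le_max_left _ _)
  · refine (norm_sub_le_of_le (hM₀ x ⟨hx.le, hx1⟩) ?_).trans (le_max_right _ _)
    rw [norm_mul, Complex.norm_cpow_eq_rpow_re_of_pos hx]
    simpa [ha] using mul_le_of_le_one_right (norm_nonneg γ) hx1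

lemma tendsto_tangent_mul_cpow (h : IsProfile a ε w F v v') (ha : a.re = 0)
    (hB : ∀ x, ‖v x‖ ≤ B) (hv' : v' =o[atTop] fun x : ℝ => x) {γ : ℂ} {M : ℝ}
    (hγ : ∀ x : ℝ, 0 < x → ‖w x - γ * (x : ℂ) ^ (1 + a)‖ ≤ M) :
    Tendsto (fun x : ℝ => F x * (x : ℂ) ^ (-a)) atTop (𝓝 ((1 + a) * γ)) := by
  let R : ℝ → ℂ := fun x =>
    (1 + a) * (w x - γ * (x : ℂ) ^ (1 + a)) - 2 * ε * ((v x ^ 2 - v' x) * F x)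
  have hw : (fun x : ℝ => w x - γ * (x : ℂ) ^ (1 + a)) =o[atTop] fun x : ℝ => x :=
    isLittleO_id_atTop_of_norm_le ((eventually_gt_atTop 0).mono hγ)
  have hv : (fun x => v x ^ 2) =o[atTop] fun x : ℝ => x :=
    isLittleO_id_atTop_of_norm_le (M := B ^ 2) <| .of_forall fun x => by
      rw [norm_pow]
      gcongr
      exact hB x
  have hF : F =O[atTop] fun _ => (1 : ℝ) := .of_bound 1 <| by simp [h.norm_tangent]
  have hR : R =o[atTop] fun x : ℝ => x :=
    (hw.const_mul_left _).sub ((by simpa using (hv.sub hv').mul_isBigO hF :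
      (fun x => (v x ^ 2 - v' x) * F x) =o[atTop] fun x : ℝ => x).const_mul_left _)
  rw [tendsto_iff_norm_sub_tendsto_zero]
  refine hR.norm_left.tendsto_div_nhds_zero.congr' ?_
  filter_upwards [eventually_gt_atTop 0] with x hx
  have hxc : (x : ℂ) ≠ 0 := by exact_mod_cast hx.ne'
  have hinv : (x : ℂ) ^ a * (x : ℂ) ^ (-a) = 1 := by
    rw [← Complex.cpow_add _ _ hxc, add_neg_cancel, Complex.cpow_zero]
  have hRx : F x * (x : ℂ) ^ (-a) - (1 + a) * γ = R x * (x : ℂ) ^ (-a) / x := by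
    rw [eq_div_iff hxc]
    simp only [R, Complex.cpow_add _ _ hxc, Complex.cpow_one]
    linear_combination -(x : ℂ) ^ (-a) * h.stationary x + (1 + a) * γ * x * hinv
  rw [hRx, norm_div, norm_mul, norm_ofReal_cpow_of_re_eq_zero hx (by simp [ha]), mul_one,
    Complex.norm_real, Real.norm_of_nonneg hx.le]

theorem exists_spiral_asymptotics (h : IsProfile a ε w F v v') (ha : a.re = 0)
    (hB : ∀ x, ‖v x‖ ≤ B) (hv' : v' =o[atTop] fun x : ℝ => x) :
    ∃ γ : ℂ, (∃ M : ℝ, ∀ x : ℝ, 0 < x → ‖w x - γ * (x : ℂ) ^ (1 + a)‖ ≤ M) ∧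
      Tendsto (fun x : ℝ => F x * (x : ℂ) ^ (-a)) atTop (𝓝 ((1 + a) * γ)) := by
  obtain ⟨γ, M, hM⟩ := h.exists_norm_curve_sub_spiral_le ha hB
  exact ⟨γ, ⟨M, hM⟩, h.tendsto_tangent_mul_cpow ha hB hv' hM⟩

end IsProfile

lemma norm_selfSimilarCurve_sub_spiral_le {q a γ : ℂ} {w : ℝ → ℂ} {M t x : ℝ}
    (hM : ∀ x : ℝ, 0 < x → ‖w x - γ * (x : ℂ) ^ (1 + a)‖ ≤ M) (hq : ‖q‖ = 1) (ha : a.re = 0)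
    (ht : 0 < t) (hx : 0 < x) :
    ‖selfSimilarCurve q a w t x - q * γ * (x : ℂ) ^ (1 + a)‖ ≤ M * t ^ ((1:ℝ)/3) := by
  have hr : 0 < t ^ (-(1:ℝ)/3) := Real.rpow_pos_of_pos ht _
  have hscale : (t : ℂ) ^ ((1 + a) / 3) * ((x * t ^ (-(1:ℝ)/3) : ℝ) : ℂ) ^ (1 + a) =
      (x : ℂ) ^ (1 + a) := by
    have ht0 : (t : ℂ) ≠ 0 := by exact_mod_cast ht.ne'
    have hx0 : (x : ℂ) ≠ 0 := by exact_mod_cast hx.ne'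
    have hxr : ((x * t ^ (-(1:ℝ)/3) : ℝ) : ℂ) ≠ 0 := by exact_mod_cast (mul_pos hx hr).ne'
    rw [Complex.cpow_def_of_ne_zero ht0, Complex.cpow_def_of_ne_zero hx0,
      Complex.cpow_def_of_ne_zero hxr, ← Complex.ofReal_log ht.le, ← Complex.ofReal_log hx.le,
      ← Complex.ofReal_log (mul_pos hx hr).le, Real.log_mul hx.ne' hr.ne', Real.log_rpow ht,
      ← Complex.exp_add]
    congr 1
    push_cast
    ring
  have hnorm : ‖(t : ℂ) ^ ((1 + a) / 3)‖ = t ^ ((1:ℝ)/3) := by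
    simp [Complex.norm_cpow_eq_rpow_re_of_pos ht, ha]
  calc ‖selfSimilarCurve q a w t x - q * γ * (x : ℂ) ^ (1 + a)‖
      = ‖q * (t : ℂ) ^ ((1 + a) / 3) * (w (x * t ^ (-(1:ℝ)/3)) -
          γ * ((x * t ^ (-(1:ℝ)/3) : ℝ) : ℂ) ^ (1 + a))‖ := by
        rw [selfSimilarCurve, ← hscale]
        ring_nf
    _ ≤ M * t ^ ((1:ℝ)/3) := by
        rw [norm_mul, norm_mul, hq, one_mul, hnorm, mul_comm]
        gcongr
        exact hM _ (mul_pos hx hr)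

/-! ### Derivatives of bounded Painlevé functions -/

lemma isBigO_id_of_norm_deriv_le {E : Type*} [NormedAddCommGroup E] [NormedSpace ℝ E]
    {f f' : ℝ → E} {M : ℝ} (hf : ∀ x, HasDerivAt f (f' x) x) (hM : ∀ x, ‖f' x‖ ≤ M) :
    f =O[cobounded ℝ] fun x : ℝ => x := by
  have increment : (fun x => f x - f 0) =O[cobounded ℝ] fun x : ℝ => x :=
    .of_bound M <| .of_forall fun x => by
      simpa using convex_univ.norm_image_sub_le_of_norm_hasDerivWithin_le
        (fun y _ => (hf y).hasDerivWithinAt) (fun y _ => hM y) (Set.mem_univ 0) (Set.mem_univ x)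
  simpa using increment.add (isLittleO_const_id_cobounded (f 0)).isBigO

theorem isLittleO_deriv_of_painleveII_of_norm_le {p q r : ℂ} {v v' : ℝ → ℂ} {B : ℝ}
    (hv : ∀ x, HasDerivAt v (v' x) x)
    (hv' : ∀ x : ℝ, HasDerivAt v' (p * x * v x + q + r * v x ^ 3) x)
    (hB : ∀ x, ‖v x‖ ≤ B) : v' =o[cobounded ℝ] fun x : ℝ => x := by
  -- The energy of the equation with `x` frozen: all terms of its derivative but `-p v²` cancel.
  let E : ℝ → ℂ := fun x => v' x ^ 2 - p * x * v x ^ 2 - 2 * q * v x - r / 2 * v x ^ 4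
  have hE (x : ℝ) : HasDerivAt E (-p * v x ^ 2) x := by
    refine (((((hv' x).pow 2).sub (((hasDerivAt_ofReal x).const_mul p).mul ((hv x).pow 2))).sub
      ((hv x).const_mul (2 * q))).sub (((hv x).pow 4).const_mul (r / 2))).congr_deriv ?_
    simp only [Pi.pow_apply]
    push_cast
    ring
  have hEO : E =O[cobounded ℝ] fun x : ℝ => x :=
    isBigO_id_of_norm_deriv_le (M := ‖p‖ * B ^ 2) hE fun x => by
      rw [norm_mul, norm_neg, norm_pow]
      gcongr
      exact hB x
  have hv1 : v =O[cobounded ℝ] fun _ => (1 : ℝ) := .of_bound B <| by simp [hB]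
  have hid : (fun x : ℝ => (x : ℂ)) =O[cobounded ℝ] fun x : ℝ => x := .of_bound 1 <| by simp
  have h1 : (fun _ => (1 : ℝ)) =O[cobounded ℝ] fun x : ℝ => x :=
    (isLittleO_const_id_cobounded 1).isBigO
  have hvn (n : ℕ) : (fun x => v x ^ n) =O[cobounded ℝ] fun _ => (1 : ℝ) := by
    simpa using hv1.pow n
  have hsq : (fun x => v' x ^ 2) =O[cobounded ℝ] fun x : ℝ => x := by
    have hpv : (fun x : ℝ => p * x * v x ^ 2) =O[cobounded ℝ] fun x : ℝ => x := by
      simpa using (hid.const_mul_left p).mul (hvn 2)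
    refine (((hEO.add hpv).add ((hv1.const_mul_left (2 * q)).trans h1)).add
      (((hvn 4).const_mul_left (r / 2)).trans h1)).congr_left fun x => ?_
    simp only [E]
    ring
  have hlt : (fun x : ℝ => x) =o[cobounded ℝ] fun x => x ^ 2 := by
    simpa using isLittleO_pow_pow_cobounded_of_lt (R := ℝ) one_lt_two
  exact (hsq.trans_isLittleO hlt).of_pow two_ne_zero

/-! ### Matching both ends by a rotation -/

namespace IsProfile

variable {a ε : ℂ} {w F v v' : ℝ → ℂ} {B : ℝ}

lemma norm_eq_one_of_tendsto_tangent_mul_cpow (h : IsProfile a ε w F v v') (ha : a.re = 0)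
    {L : ℂ} (hL : Tendsto (fun x : ℝ => F x * (x : ℂ) ^ (-a)) atTop (𝓝 L)) : ‖L‖ = 1 := by
  refine tendsto_nhds_unique hL.norm (tendsto_const_nhds.congr' ?_)
  filter_upwards [eventually_gt_atTop 0] with x hx
  rw [norm_mul, h.norm_tangent, norm_ofReal_cpow_of_re_eq_zero hx (by simp [ha]), mul_one]

lemma amplitude_eq_mul_amplitude (h : IsProfile a ε w F v v') (ha : a.re = 0) {ω γp γm : ℂ}
    (hω : Tendsto (fun x => F x / F (-x)) atTop (𝓝 ω))
    (hp : Tendsto (fun x : ℝ => F x * (x : ℂ) ^ (-a)) atTop (𝓝 ((1 + a) * γp)))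
    (hm : Tendsto (fun x : ℝ => F (-x) * (x : ℂ) ^ (-a)) atTop (𝓝 ((1 + a) * γm))) :
    γp = ω * γm := by
  have hm1 : ‖(1 + a) * γm‖ = 1 := h.neg.norm_eq_one_of_tendsto_tangent_mul_cpow ha hm
  have hne : (1 + a) * γm ≠ 0 := norm_ne_zero_iff.1 (hm1 ▸ one_ne_zero)
  have hquot : Tendsto (fun x => F x / F (-x)) atTop (𝓝 ((1 + a) * γp / ((1 + a) * γm))) := by
    refine (hp.div hm hne).congr' ?_
    filter_upwards [eventually_gt_atTop 0] with x hx
    exact mul_div_mul_right _ _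
      (norm_ne_zero_iff.1 (by rw [norm_ofReal_cpow_of_re_eq_zero hx (by simp [ha])]; simp))
  rw [tendsto_nhds_unique hω hquot]
  field_simp [left_ne_zero_of_mul hne, right_ne_zero_of_mul hne]

theorem exists_rotation_norm_selfSimilarCurve_sub_le (h : IsProfile a ε w F v v')
    (ha : a.re = 0) (hB : ∀ x, ‖v x‖ ≤ B) (hv' : v' =o[cobounded ℝ] fun x : ℝ => x)
    {ω Ap Am : ℂ} (hω : Tendsto (fun x => F x / F (-x)) atTop (𝓝 ω))
    (hAm : ‖(1 + a) * Am‖ = 1) (hA : Ap = ω * Am) :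
    ∃ q : ℂ, ‖q‖ = 1 ∧ ∃ M : ℝ, 0 < M ∧ ∀ t : ℝ, 0 < t → ∀ x : ℝ, 0 < x →
      ‖selfSimilarCurve q a w t x - Ap * (x : ℂ) ^ (1 + a)‖ ≤ M * t ^ ((1:ℝ)/3) ∧
      ‖selfSimilarCurve q a w t (-x) + Am * (x : ℂ) ^ (1 + a)‖ ≤ M * t ^ ((1:ℝ)/3) := by
  have hv'_neg : (fun x => v' (-x)) =o[cobounded ℝ] fun x : ℝ => x :=
    (hv'.comp_tendsto tendsto_neg_cobounded).trans_isBigO (isBigO_refl _ _).neg_left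
  have atTop_le := IsOrderBornology.atTop_le_cobounded (α := ℝ)
  obtain ⟨γp, ⟨Mp, hMp⟩, hp⟩ := h.exists_spiral_asymptotics ha hB (hv'.mono atTop_le)
  obtain ⟨γm, ⟨Mm, hMm⟩, hm⟩ :=
    h.neg.exists_spiral_asymptotics ha (by simpa using fun x => hB (-x)) (hv'_neg.mono atTop_le)
  have hγ := h.amplitude_eq_mul_amplitude ha hω hp hm
  have hγm : ‖(1 + a) * γm‖ = 1 := h.neg.norm_eq_one_of_tendsto_tangent_mul_cpow ha hm
  have hne : (1 + a) * γm ≠ 0 := norm_ne_zero_iff.1 (hγm ▸ one_ne_zero)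
  obtain ⟨q, hq, hqp, hqm⟩ : ∃ q : ℂ, ‖q‖ = 1 ∧ q * γp = Ap ∧ q * γm = Am := by
    have hqm : Am / γm * γm = Am := div_mul_cancel₀ Am (right_ne_zero_of_mul hne)
    refine ⟨Am / γm, ?_, by rw [hγ, hA, mul_left_comm, hqm], hqm⟩
    rw [← mul_div_mul_left Am γm (left_ne_zero_of_mul hne), norm_div, hAm, hγm, div_one]
  refine ⟨q, hq, max 1 (max Mp Mm), by positivity, fun t ht x hx => ⟨?_, ?_⟩⟩
  · rw [← hqp]
    refine (norm_selfSimilarCurve_sub_spiral_le hMp hq ha ht hx).trans ?_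
    gcongr
    exact (le_max_left _ _).trans (le_max_right _ _)
  · have hreflect : selfSimilarCurve q a w t (-x) =
        -selfSimilarCurve q a (fun y => -w (-y)) t x := by
      simp [selfSimilarCurve]
    rw [hreflect, neg_add_eq_sub, norm_sub_rev, ← hqm]
    refine (norm_selfSimilarCurve_sub_spiral_le hMm hq ha ht hx).trans ?_
    gcongr
    exact (le_max_right _ _).trans (le_max_right _ _)

end IsProfile

/-! ### Boundedness from the asymptotic expansions -/

lemma exists_norm_le_of_isBigO_one {E : Type*} [NormedAddCommGroup E] {f : ℝ → E}
    (hf : Continuous f) (hbot : f =O[atBot] fun _ => (1 : ℝ))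
    (htop : f =O[atTop] fun _ => (1 : ℝ)) :
    ∃ B, ∀ x, ‖f x‖ ≤ B := by
  obtain ⟨K, hK⟩ := (hbot.sup htop).bound
  rw [← IsOrderBornology.cobounded_eq, Metric.cobounded_eq_cocompact, eventually_iff,
    mem_cocompact] at hK
  obtain ⟨s, hs, hsK⟩ := hK
  obtain ⟨L, hL⟩ := hs.exists_bound_of_continuousOn hf.continuousOn
  refine ⟨max K L, fun x => ?_⟩
  by_cases hx : x ∈ s
  · exact (hL x hx).trans (le_max_right _ _)
  · simpa using (hsK hx).trans (mul_le_mul_of_nonneg_right (le_max_left K L) (norm_nonneg _))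

lemma isBigO_ofReal_zpow_one_atTop {n : ℤ} (hn : n ≤ 0) :
    (fun x : ℝ => (x : ℂ) ^ n) =O[atTop] fun _ => (1 : ℝ) := by
  refine .of_bound 1 ?_
  filter_upwards [eventually_ge_atTop 1] with x hx
  simpa [abs_of_nonneg (zero_le_one.trans hx)] using zpow_le_one_of_nonpos₀ hx hn

lemma isBigO_one_of_expansion_atTop {u : ℝ → ℂ} {c₁ c₄ c₇ : ℂ} {x₀ K : ℝ}
    (hu : ∀ x : ℝ, x₀ ≤ x → ‖u x - c₁ / x - c₄ * (x : ℂ) ^ (-4 : ℤ) - c₇ * (x : ℂ) ^ (-7 : ℤ)‖ ≤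
      K * x ^ (-10 : ℤ)) :
    u =O[atTop] fun _ => (1 : ℝ) := by
  have power (c : ℂ) {n : ℤ} (hn : n ≤ 0) := (isBigO_ofReal_zpow_one_atTop hn).const_mul_left c
  have remainder : (fun x : ℝ => u x - c₁ / x - c₄ * (x : ℂ) ^ (-4 : ℤ) - c₇ * (x : ℂ) ^ (-7 : ℤ))
      =O[atTop] fun _ => (1 : ℝ) :=
    .trans (.of_norm_eventuallyLE ((eventually_ge_atTop x₀).mono hu))
      (Complex.isBigO_ofReal_left.1 (by simpa using power K (n := -10) (by norm_num)))
  refine (((remainder.add (power c₇ (n := -7) (by norm_num))).add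
    (power c₄ (n := -4) (by norm_num))).add (power c₁ (n := -1) (by norm_num))).congr_left
    fun x => ?_
  rw [zpow_neg_one]
  ring

lemma isBigO_one_of_expansion_atBot {u S : ℝ → ℂ} {c d : ℂ} {r s x₁ K : ℝ} (hr : r ≤ 0)
    (hs : s ≤ 0) (hS : ∀ x, ‖S x‖ ≤ 1)
    (hu : ∀ x : ℝ, x ≤ -x₁ → ‖u x - c / x - d * (((-x) ^ r : ℝ) : ℂ) * S x‖ ≤ K * (-x) ^ s) :
    u =O[atBot] fun _ => (1 : ℝ) := by
  have power {p : ℝ} (hp : p ≤ 0) : (fun x : ℝ => (-x) ^ p) =O[atBot] fun _ => (1 : ℝ) := by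
    refine .of_bound 1 ?_
    filter_upwards [eventually_le_atBot (-1)] with x hx
    have hx1 : 1 ≤ -x := by linarith
    simpa [abs_of_nonneg (Real.rpow_nonneg (zero_le_one.trans hx1) p)] using
      Real.rpow_le_one_of_one_le_of_nonpos hx1 hp
  have oscillation : (fun x : ℝ => d * (((-x) ^ r : ℝ) : ℂ) * S x) =O[atBot] fun _ => (1 : ℝ) := by
    have hS1 : S =O[atBot] fun _ => (1 : ℝ) :=
      .of_bound 1 (by simp [hS])
    simpa using ((Complex.isBigO_ofReal_left.2 (power hr)).const_mul_left d).mul hS1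
  have inverse : (fun x : ℝ => c / x) =O[atBot] fun _ => (1 : ℝ) := by
    have := (Complex.isBigO_ofReal_left.2 (tendsto_inv_atBot_zero.isBigO_one ℝ)).const_mul_left c
    simpa [div_eq_mul_inv] using this
  have remainder : (fun x : ℝ => u x - c / x - d * (((-x) ^ r : ℝ) : ℂ) * S x)
      =O[atBot] fun _ => (1 : ℝ) :=
    .trans (.of_norm_eventuallyLE ((eventually_le_atBot (-x₁)).mono hu))
      ((power hs).const_mul_left K)
  simpa using (remainder.add oscillation).add inverse

lemma norm_sin_le_one_of_im_eq_zero {z : ℂ} (hz : z.im = 0) : ‖Complex.sin z‖ ≤ 1 := by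
  have hre : (z.re : ℂ) = z := Complex.ext rfl hz.symm
  rw [← hre, ← Complex.ofReal_sin, Complex.norm_real]
  exact Real.abs_sin_le_one z.re

lemma exists_norm_le_of_expansions {u : ℝ → ℂ} {α c₄ c₇ d : ℂ} {φ x₀ x₁ K K' : ℝ}
    (hu : Continuous u) (hd : d.re = 0)
    (hp : ∀ x : ℝ, x₀ ≤ x → ‖u x - α / x - c₄ * (x : ℂ) ^ (-4 : ℤ) - c₇ * (x : ℂ) ^ (-7 : ℤ)‖ ≤
      K * x ^ (-10 : ℤ))
    (hm : ∀ x : ℝ, x ≤ -x₁ →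
      ‖u x - α / x - d * (((-x) ^ (-(1:ℝ)/4) : ℝ) : ℂ) *
        Complex.sin (((2/3 * (-x) ^ ((3:ℝ)/2) : ℝ) : ℂ)
          - 3/4 * d ^ 2 * (Real.log (-x) : ℂ) + (φ : ℂ))‖ ≤ K' * (-x) ^ (-(7:ℝ)/4)) :
    ∃ B, ∀ x, ‖u x‖ ≤ B := by
  have phase_real (r s : ℝ) : ((r : ℂ) - 3/4 * d ^ 2 * (s : ℂ) + (φ : ℂ)).im = 0 := by
    simp [sq, hd]
  exact exists_norm_le_of_isBigO_one hu
    (isBigO_one_of_expansion_atBot (by norm_num) (by norm_num)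
      (fun x => norm_sin_le_one_of_im_eq_zero (phase_real _ _)) hm)
    (isBigO_one_of_expansion_atTop hp)

/-! ### From the Painlevé function to the profile -/

/-- The unit tangent of the curve with curvature `-2iv` for imaginary `v`. -/
noncomputable def unitTangent (v : ℝ → ℂ) (x : ℝ) : ℂ :=
  Complex.exp (2 * ∫ y in (0:ℝ)..x, v y)

/-- The dilation `u(x/c)/c`. It turns a solution of the Painlevé equation into the curvature of a
profile with `ε = c ^ 3`. -/
noncomputable def rescale (c : ℝ) (u : ℝ → ℂ) (x : ℝ) : ℂ :=
  u (x / c) / c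

section Rescale

variable {a : ℂ} {c : ℝ} {u v w : ℝ → ℂ}

lemma hasDerivAt_unitTangent (hv : Continuous v) (x : ℝ) :
    HasDerivAt (unitTangent v) (2 * v x * unitTangent v x) x := by
  refine ((hv.integral_hasStrictDerivAt 0 x).hasDerivAt.const_mul 2).cexp.congr_deriv ?_
  exact mul_comm _ _

lemma unitTangent_div_unitTangent (hv : Continuous v) (x y : ℝ) :
    unitTangent v y / unitTangent v x = Complex.exp (2 * ∫ z in x..y, v z) := by
  rw [unitTangent, unitTangent, ← Complex.exp_sub, ← mul_sub,
    intervalIntegral.integral_interval_sub_left (hv.intervalIntegrable _ _)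
      (hv.intervalIntegrable _ _)]

lemma norm_unitTangent (hv : Continuous v) (him : ∀ x, (v x).re = 0) (x : ℝ) :
    ‖unitTangent v x‖ = 1 := by
  have hre : (∫ y in (0:ℝ)..x, v y).re = 0 := by
    simpa [him] using (Complex.reCLM.intervalIntegral_comp_comm (hv.intervalIntegrable 0 x)).symm
  simp [unitTangent, Complex.norm_exp, hre]

lemma integral_rescale (hc : c ≠ 0) (u : ℝ → ℂ) (x y : ℝ) :
    ∫ z in x..y, rescale c u z = ∫ z in x / c..y / c, u z := by
  have hc' : (c : ℂ) ≠ 0 := by exact_mod_cast hc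
  simp only [rescale, intervalIntegral.integral_div, intervalIntegral.integral_comp_div u hc,
    Complex.real_smul]
  field_simp

lemma unitTangent_rescale (c : ℝ) (u : ℝ → ℂ) (x : ℝ) :
    unitTangent (rescale c u) x =
      Complex.exp (((2 / c : ℝ) : ℂ) * ∫ z in (0:ℝ)..x, u (z / c)) := by
  simp only [unitTangent, rescale, intervalIntegral.integral_div]
  congr 1
  push_cast
  ring

lemma norm_rescale_le {B : ℝ} (hB : ∀ x, ‖u x‖ ≤ B) (c x : ℝ) : ‖rescale c u x‖ ≤ B / |c| := by
  rw [rescale, norm_div, Complex.norm_real, Real.norm_eq_abs]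
  exact div_le_div_of_nonneg_right (hB _) (abs_nonneg c)

lemma continuous_rescale (hu : Continuous u) (c : ℝ) : Continuous (rescale c u) :=
  (hu.comp (continuous_id.div_const c)).div_const _

lemma hasDerivAt_rescale {g g' : ℝ → ℂ} (hg : ∀ x, HasDerivAt g (g' x) x) (c x : ℝ) :
    HasDerivAt (rescale c g) (g' (x / c) / c ^ 2) x := by
  refine (((hg (x / c)).scomp x ((hasDerivAt_id x).div_const c)).div_const (c : ℂ)).congr_deriv ?_
  simp only [Complex.real_smul]
  push_cast
  ring

lemma hasDerivAt_deriv_rescale (hc : c ≠ 0) (hu : ContDiff ℝ 2 u)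
    (hP : ∀ x : ℝ, deriv (deriv u) x = x * u x + 2 * u x ^ 3 - a / 2) (x : ℝ) :
    HasDerivAt (fun x : ℝ => deriv u (x / c) / c ^ 2)
      ((x * rescale c u x - a / 2) / c ^ 3 + 2 * rescale c u x ^ 3) x := by
  have hc' : (c : ℂ) ≠ 0 := by exact_mod_cast hc
  have hderiv (x : ℝ) : HasDerivAt (deriv u) (deriv (deriv u) x) x :=
    ((hu.iterate_deriv' 1 1).differentiable one_ne_zero x).hasDerivAt
  have := (hasDerivAt_rescale hderiv c x).div_const (c : ℂ)
  refine (this.congr_deriv ?_).congr_of_eventuallyEq (.of_forall fun y => ?_)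
  · rw [hP, rescale]
    push_cast
    field_simp
    ring
  · simp only [rescale, div_div, sq]

theorem isProfile_of_painleveII (hc : c ≠ 0) (hu : ContDiff ℝ 2 u)
    (hP : ∀ x : ℝ, deriv (deriv u) x = x * u x + 2 * u x ^ 3 - a / 2)
    (him : ∀ x, (u x).re = 0) {C : ℂ}
    (hw : ∀ x, w x = (∫ y in (0:ℝ)..x, unitTangent (rescale c u) y) - C)
    (hC : (1 + a) * C = 2 * c * (deriv u 0 - u 0 ^ 2)) :
    IsProfile a (c ^ 3) w (unitTangent (rescale c u)) (rescale c u)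
      (fun x => deriv u (x / c) / c ^ 2) := by
  have hc' : (c : ℂ) ≠ 0 := by exact_mod_cast hc
  have hv := hasDerivAt_rescale (fun x => (hu.differentiable two_ne_zero x).hasDerivAt) c
  have hvc := continuous_rescale hu.continuous c
  have hF := hasDerivAt_unitTangent hvc
  have hFc : Continuous (unitTangent (rescale c u)) :=
    continuous_iff_continuousAt.2 fun x => (hF x).continuousAt
  refine .of_painleveII (pow_ne_zero 3 hc') (fun x => ?_)
    (norm_unitTangent hvc fun x => by simp [rescale, him]) hF hv
    (hasDerivAt_deriv_rescale hc hu hP) ?_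
  · rw [funext hw]
    exact (hFc.integral_hasStrictDerivAt 0 x).hasDerivAt.sub_const C
  · simp only [hw, rescale, unitTangent, intervalIntegral.integral_same, mul_zero,
      Complex.exp_zero, zero_div]
    field_simp
    linear_combination -hC

lemma isLittleO_deriv_rescale (hc : c ≠ 0) (hu : ContDiff ℝ 2 u)
    (hP : ∀ x : ℝ, deriv (deriv u) x = x * u x + 2 * u x ^ 3 - a / 2) {B : ℝ}
    (hB : ∀ x, ‖rescale c u x‖ ≤ B) :
    (fun x : ℝ => deriv u (x / c) / c ^ 2) =o[cobounded ℝ] fun x : ℝ => x := by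
  refine isLittleO_deriv_of_painleveII_of_norm_le (p := 1 / c ^ 3) (q := -(a / 2) / c ^ 3) (r := 2)
    (hasDerivAt_rescale (fun x => (hu.differentiable two_ne_zero x).hasDerivAt) c)
    (fun x => (hasDerivAt_deriv_rescale hc hu hP x).congr_deriv ?_) hB
  ring

lemma tendsto_unitTangent_rescale_div (hc : 0 < c) (hu : Continuous u) {ω : ℂ}
    (hω : Tendsto (fun x : ℝ => Complex.exp (2 * ∫ y in (-x)..x, u y)) atTop (𝓝 ω)) :
    Tendsto (fun x => unitTangent (rescale c u) x / unitTangent (rescale c u) (-x)) atTop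
      (𝓝 ω) := by
  have hv := continuous_rescale hu c
  simpa [Function.comp_def, unitTangent_div_unitTangent hv, integral_rescale hc.ne', neg_div] using
    hω.comp (tendsto_id.atTop_div_const hc)

end Rescale

/-! ### Double logarithmic spirals -/

/-- The initial curve `z₀`: two congruent logarithmic spirals centred at the origin, one for each
sign of the parameter. -/
noncomputable def doubleSpiral (μ θp θm x : ℝ) : ℂ :=
  (x : ℂ) * (((1 + μ ^ 2) ^ (-(1:ℝ)/2) : ℝ) : ℂ) *
    Complex.exp (Complex.I * ((if 0 < x then θp else θm) - μ * Real.log |x|))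

/-- The coefficient `A` which makes `A x^(1 - iμ)` a logarithmic spiral traversed at unit speed. -/
noncomputable def spiralCoefficient (μ θ : ℝ) : ℂ :=
  ((1 + μ ^ 2) ^ (-(1:ℝ)/2) : ℝ) * Complex.exp (Complex.I * θ)

lemma norm_one_add_mul_spiralCoefficient (μ θ : ℝ) :
    ‖(1 + -(Complex.I * μ)) * spiralCoefficient μ θ‖ = 1 := by
  have hμ : 0 < 1 + μ ^ 2 := by positivity
  have hsq : ‖1 + -(Complex.I * μ)‖ = (1 + μ ^ 2) ^ ((1:ℝ)/2) := by
    rw [← Real.sqrt_eq_rpow, Complex.norm_def, Complex.normSq_apply]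
    simp [sq]
  rw [spiralCoefficient, norm_mul, norm_mul, hsq, mul_comm Complex.I, Complex.norm_exp_ofReal_mul_I,
    Complex.norm_real, Real.norm_of_nonneg (by positivity), mul_one, ← Real.rpow_add hμ]
  norm_num

lemma doubleSpiral_of_pos (μ θp θm : ℝ) {x : ℝ} (hx : 0 < x) :
    doubleSpiral μ θp θm x = spiralCoefficient μ θp * (x : ℂ) ^ (1 + -(Complex.I * μ)) := by
  rw [doubleSpiral, spiralCoefficient, ofReal_cpow_one_add hx, if_pos hx, abs_of_pos hx, mul_sub,
    sub_eq_add_neg, Complex.exp_add]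
  ring_nf

lemma doubleSpiral_of_neg (μ θp θm : ℝ) {x : ℝ} (hx : x < 0) :
    doubleSpiral μ θp θm x =
      -(spiralCoefficient μ θm * ((-x : ℝ) : ℂ) ^ (1 + -(Complex.I * μ))) := by
  rw [doubleSpiral, spiralCoefficient, ofReal_cpow_one_add (neg_pos.2 hx), if_neg hx.not_gt,
    abs_of_neg hx, mul_sub, sub_eq_add_neg, Complex.exp_add]
  push_cast
  ring_nf

lemma spiralCoefficient_eq_mul (μ θp θm : ℝ) :
    spiralCoefficient μ θp =
      Complex.exp (Complex.I * (θp - θm)) * spiralCoefficient μ θm := by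
  rw [spiralCoefficient, spiralCoefficient, mul_left_comm, ← Complex.exp_add]
  ring_nf

lemma exists_exp_I_mul_eq_of_norm_eq_one {q : ℂ} (hq : ‖q‖ = 1) :
    ∃ β ∈ Set.Ico (0:ℝ) (2 * Real.pi), Complex.exp (Complex.I * β) = q := by
  have periodic : Function.Periodic (fun θ : ℝ => Complex.exp (Complex.I * θ)) (2 * Real.pi) :=
    fun θ => by simp [add_mul, Complex.exp_add, mul_comm Complex.I]
  obtain ⟨θ, rfl⟩ := (Complex.norm_eq_one_iff q).1 hq
  obtain ⟨β, hβ, h⟩ := periodic.exists_mem_Ico₀ Real.two_pi_pos θ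
  exact ⟨β, hβ, by simpa [mul_comm] using h.symm⟩

lemma cbrt3_pos : 0 < cbrt3 := by
  rw [cbrt3]
  positivity

lemma cbrt3_pow_three : cbrt3 ^ 3 = 3 := by
  rw [cbrt3, ← Real.rpow_mul_natCast (by norm_num)]
  norm_num

theorem stmt_19_general (μ θp θm : ℝ) (α : ℂ) (hα : α = -Complex.I * μ / 2)
    (u : ℝ → ℂ) (hu : ContDiff ℝ 2 u)
    (hP : ∀ x : ℝ, deriv (deriv u) x = (x : ℂ) * u x + 2 * (u x) ^ 3 - α)
    (him : ∀ x : ℝ, (u x).re = 0) (hB : ∃ B, ∀ x, ‖u x‖ ≤ B)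
    (hlim : Tendsto (fun x : ℝ => Complex.exp (2 * ∫ y in (-x)..x, u y))
      atTop (𝓝 (Complex.exp (Complex.I * (θp - θm)))))
    (C : ℂ) (hC : C = (2 * cbrt3 / (1 - Complex.I * μ)) * (deriv u 0 - (u 0) ^ 2))
    (w : ℝ → ℂ)
    (hw : ∀ x : ℝ, w x = (∫ y in (0:ℝ)..x, Complex.exp (((2 / cbrt3 : ℝ) : ℂ) *
      ∫ z in (0:ℝ)..y, u (z / cbrt3))) - C) :
    ∃ β ∈ Set.Ico (0:ℝ) (2 * Real.pi), ∃ M : ℝ, 0 < M ∧ ∃ z : ℝ → ℝ → ℂ,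
      (∀ t : ℝ, 0 < t → ∀ x : ℝ, z t x =
        Complex.exp (Complex.I * β) * ((t ^ ((1:ℝ)/3) : ℝ) : ℂ) *
          Complex.exp (-(Complex.I * μ / 3) * Real.log t) * w (x * t ^ (-(1:ℝ)/3))) ∧
      SolvesGeometricFlow z ∧
      ∀ t : ℝ, 0 < t → ∀ x : ℝ, x ≠ 0 →
        ‖z t x - doubleSpiral μ θp θm x‖ ≤ M * t ^ ((1:ℝ)/3) := by
  obtain ⟨B, hB⟩ := hB
  have hv := norm_rescale_le hB cbrt3
  let a : ℂ := -(Complex.I * μ)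
  have ha : a.re = 0 := by simp [a]
  have ha1 : 1 - Complex.I * μ ≠ 0 := fun h => by simpa using congrArg Complex.re h
  have hPa (x : ℝ) : deriv (deriv u) x = x * u x + 2 * u x ^ 3 - a / 2 := by simp [hP, hα, a]
  have hprofile : IsProfile a 3 w (unitTangent (rescale cbrt3 u)) (rescale cbrt3 u)
      (fun x => deriv u (x / cbrt3) / cbrt3 ^ 2) := by
    have := isProfile_of_painleveII cbrt3_pos.ne' hu hPa him
      (by simpa only [unitTangent_rescale] using hw) (by rw [hC]; field_simp [a]; ring)
    rwa [← Complex.ofReal_pow, cbrt3_pow_three] at this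
  obtain ⟨q, hq, M, hM, hbound⟩ := hprofile.exists_rotation_norm_selfSimilarCurve_sub_le ha hv
    (isLittleO_deriv_rescale cbrt3_pos.ne' hu hPa hv)
    (tendsto_unitTangent_rescale_div cbrt3_pos hu.continuous hlim)
    (norm_one_add_mul_spiralCoefficient μ θm) (spiralCoefficient_eq_mul μ θp θm)
  obtain ⟨β, hβ, rfl⟩ := exists_exp_I_mul_eq_of_norm_eq_one hq
  refine ⟨β, hβ, M, hM, selfSimilarCurve _ a w, fun t ht x => ?_,
    hprofile.solvesGeometricFlow ha hq, fun t ht x hx => ?_⟩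
  · rw [selfSimilarCurve_eq ht, neg_div]
  · rcases hx.lt_or_gt with hneg | hpos
    · rw [doubleSpiral_of_neg μ θp θm hneg, sub_neg_eq_add]
      simpa only [neg_neg] using (hbound t ht (-x) (neg_pos.2 hneg)).2
    · rw [doubleSpiral_of_pos μ θp θm hpos]
      exact (hbound t ht x hpos).1

/-- Main theorem: there exist `β ∈ [0,2π)` and `M > 0` such that the function
`z(t,x) = e^{iβ} t^{1/3} e^{-(iμ/3) ln t} w(x t^{-1/3})` solves the geometric flow on
`(0,∞)×ℝ` and satisfies `|z(t,x) - z₀(x)| ≤ M t^{1/3}` for `t > 0` and `x ≠ 0`, where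
`z₀` is the double logarithmic spiral with parameters `θ₊, θ₋, μ`. -/
theorem stmt_19 (μ θp θm : ℝ)
    (hθp : θp ∈ Set.Ico (0:ℝ) (2 * Real.pi)) (hθm : θm ∈ Set.Ico (0:ℝ) (2 * Real.pi))
    (α : ℂ) (hα : α = -Complex.I * μ / 2)
    (u : ℝ → ℂ) (hu : ContDiff ℝ (⊤ : ℕ∞) u)
    (hP : ∀ x : ℝ, deriv (deriv u) x = (x : ℂ) * u x + 2 * (u x) ^ 3 - α)
    (him : ∀ x : ℝ, (u x).re = 0)
    (hAp : ∃ x₀ : ℝ, 0 < x₀ ∧ ∃ K : ℝ, 0 < K ∧ ∀ x : ℝ, x₀ ≤ x →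
      ‖u x - α / x - 2 * α * (1 - α ^ 2) * (x : ℂ) ^ (-4 : ℤ)
        - 4 * α * (1 - α ^ 2) * (10 - 3 * α ^ 2) * (x : ℂ) ^ (-7 : ℤ)‖
        ≤ K * x ^ (-10 : ℤ))
    (hAm : ∃ d : ℂ, d.re = 0 ∧ ∃ φ : ℝ, ∃ x₁ : ℝ, 0 < x₁ ∧ ∃ K' : ℝ, 0 < K' ∧
      ∀ x : ℝ, x ≤ -x₁ →
        ‖u x - α / x - d * (((-x) ^ (-(1:ℝ)/4) : ℝ) : ℂ) *
          Complex.sin (((2/3 * (-x) ^ ((3:ℝ)/2) : ℝ) : ℂ)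
            - 3/4 * d ^ 2 * (Real.log (-x) : ℂ) + (φ : ℂ))‖
          ≤ K' * (-x) ^ (-(7:ℝ)/4))
    (hlim : Filter.Tendsto (fun x : ℝ => Complex.exp (2 * ∫ y in (-x)..x, u y))
      Filter.atTop (nhds (Complex.exp (Complex.I * (θp - θm)))))
    (Cc : ℂ)
    (hC : Cc = (2 * cbrt3 / (1 - Complex.I * μ)) * (deriv u 0 - (u 0) ^ 2))
    (w : ℝ → ℂ)
    (hw : ∀ x : ℝ, w x =
      (∫ y in (0:ℝ)..x, Complex.exp (((2 / cbrt3 : ℝ) : ℂ) *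
        ∫ z in (0:ℝ)..y, u (z / cbrt3))) - Cc) :
    ∃ β : ℝ, β ∈ Set.Ico (0:ℝ) (2 * Real.pi) ∧ ∃ M : ℝ, 0 < M ∧
    ∃ z : ℝ → ℝ → ℂ,
      (∀ t : ℝ, 0 < t → ∀ x : ℝ, z t x =
        Complex.exp (Complex.I * β) * ((t ^ ((1:ℝ)/3) : ℝ) : ℂ) *
          Complex.exp (-(Complex.I * μ / 3) * Real.log t) *
          w (x * t ^ (-(1:ℝ)/3))) ∧
      (∀ t : ℝ, 0 < t → ∀ x : ℝ,
        (deriv (fun s : ℝ => z s x) t =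
          -(deriv (deriv (deriv (z t))) x) +
            (3/2) * (starRingEnd ℂ) (deriv (z t) x) * (deriv (deriv (z t)) x) ^ 2) ∧
        ‖deriv (z t) x‖ = 1) ∧
      (∀ t : ℝ, 0 < t → ∀ x : ℝ, x ≠ 0 →
        ‖z t x - (x : ℂ) * (((1 + μ ^ 2) ^ (-(1:ℝ)/2) : ℝ) : ℂ) *
            Complex.exp (Complex.I * ((if 0 < x then θp else θm) - μ * Real.log |x|))‖
          ≤ M * t ^ ((1:ℝ)/3)) := by
  obtain ⟨x₀, -, K, -, hK⟩ := hAp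
  obtain ⟨d, hd, φ, x₁, -, K', -, hK'⟩ := hAm
  exact stmt_19_general μ θp θm α hα u (contDiff_infty.1 hu 2) hP him
    (exists_norm_le_of_expansions hu.continuous hd hK hK') hlim Cc hC w hw
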